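/- Strict positivity in the sector generated by f_*: suppose s₀ > 0 satisfies the free boundary condition tanh(φ(s₀)) = B(s₀)·K/(a·sinh(2s₀)), and let r := arcosh(A(s₀)·cosh(φ(s₀))). Then for every integer k with k² ≥ 4 and every continuously differentiable h : [−s₀, s₀] → ℝ that is not identically zero, one has S_k(f_*·h) > 0. -/

import Mathlib

/-!
The function `X = A cosh φ` is the timelike Minkowski coordinate of the surface, so `ΔX = 2X`,
which for a rotation surface of radius `B` reads `(B X')' = 2 B X`. Differentiating once more shows
that `f_* = X'` solves the mode-one Jacobi equation `(B f_*')' + B W₁ f_* = 0`. Substituting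
`u = f_* h` and completing the total derivative `(B f_*' f_* h²)'` turns `S₁(u)` into
`∫ B (f_* h')²` plus boundary terms. The free boundary condition says that the normal has no
timelike component at `s₀`, whence `f_* = sinh r` and `f_*' = cosh r` there and the boundary terms
cancel. Therefore `S₁(u) ≥ 0`, and `S_k(u) = S₁(u) + (k² - 1) ∫ u² / B` is positive because `f_*`
vanishes only at `0`.
-/

namespace MoriCatenoid

/-- Profile function `B(s) = √(a·cosh(2s) − 1/2)` of the Mori family. -/
noncomputable def B (a s : ℝ) : ℝ := Real.sqrt (a * Real.cosh (2 * s) - 1 / 2)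

/-- Profile function `A(s) = √(a·cosh(2s) + 1/2)` of the Mori family. -/
noncomputable def A (a s : ℝ) : ℝ := Real.sqrt (a * Real.cosh (2 * s) + 1 / 2)

/-- The constant `K = √(a² − 1/4)`. -/
noncomputable def K (a : ℝ) : ℝ := Real.sqrt (a ^ 2 - 1 / 4)

/-- The angle function `φ(s) = K·∫₀ˢ dt/(A(t)²·B(t))`. -/
noncomputable def φ (a s : ℝ) : ℝ := K a * ∫ t in (0:ℝ)..s, 1 / ((A a t) ^ 2 * B a t)

/-- The mode-one Jacobi field `f_*(s) = d/ds (A(s)·cosh(φ(s)))`. -/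
noncomputable def fstar (a s : ℝ) : ℝ := deriv (fun t => A a t * Real.cosh (φ a t)) s

/-- Squared norm of the second fundamental form, `|II|²(s) = 2·(B''(s)/B(s) − 1)`. -/
noncomputable def IIsq (a s : ℝ) : ℝ := 2 * (deriv (deriv (B a)) s / B a s - 1)

/-- The mode-`k` potential `W_k(s) = |II|²(s) − 2 − k²/B(s)²`. -/
noncomputable def W (a : ℝ) (k : ℤ) (s : ℝ) : ℝ := IIsq a s - 2 - (k : ℝ) ^ 2 / (B a s) ^ 2

/-- Inverse hyperbolic cosine: `arcosh x = log (x + √(x² − 1))`. -/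
noncomputable def arcosh (x : ℝ) : ℝ := Real.log (x + Real.sqrt (x ^ 2 - 1))

/-- The axial boost field `u_*(s) = −a·sinh(2s)/B(s)`. -/
noncomputable def ustar (a s : ℝ) : ℝ := -a * Real.sinh (2 * s) / B a s

/-- The radial quadratic form of mode `k`:
`S_k(u) = ∫_{−s₀}^{s₀} (B·u'² − B·W_k·u²) − coth(r)·B(s₀)·(u(s₀)² + u(−s₀)²)`,
where `u'` is the derivative of `u` within `[−s₀, s₀]`. -/
noncomputable def Sk (a s₀ r : ℝ) (k : ℤ) (u : ℝ → ℝ) : ℝ :=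
  (∫ s in (-s₀)..s₀,
      (B a s * (derivWithin u (Set.Icc (-s₀) s₀) s) ^ 2 - B a s * W a k s * u s ^ 2))
    - Real.cosh r / Real.sinh r * B a s₀ * (u s₀ ^ 2 + u (-s₀) ^ 2)

section Calculus

open Set

variable {α β : ℝ}

lemma exists_mul_ne_zero_of_dense_support {E R : Type*} [TopologicalSpace E] [MulZeroClass R]
    [NoZeroDivisors R] [TopologicalSpace R] [T2Space R] {S : Set E} {f h : E → R}
    (hS : S ⊆ closure (interior S)) (hf : Dense f.support) (hh : ContinuousOn h S)
    (hne : ∃ s ∈ S, h s ≠ 0) : ∃ s ∈ S, f s * h s ≠ 0 := by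
  by_contra! hzero
  have hdense : S ⊆ closure (interior S ∩ f.support) :=
    hS.trans (closure_minimal (hf.open_subset_closure_inter isOpen_interior) isClosed_closure)
  have hEqOn : EqOn h 0 (interior S ∩ f.support) := fun s hs =>
    (mul_eq_zero.1 (hzero s (interior_subset hs.1))).resolve_left hs.2
  obtain ⟨s, hs, hhs⟩ := hne
  exact hhs (hEqOn.of_subset_closure hh continuousOn_const
    (inter_subset_left.trans interior_subset) hdense hs)

lemma integral_sq_div_pos {p u : ℝ → ℝ} (hαβ : α < β) (hp : ContinuousOn p (Icc α β))
    (hp_pos : ∀ s ∈ Icc α β, 0 < p s) (hu : ContinuousOn u (Icc α β))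
    (hne : ∃ s ∈ Icc α β, u s ≠ 0) : 0 < ∫ s in α..β, u s ^ 2 / p s := by
  obtain ⟨c, hc, huc⟩ := hne
  refine intervalIntegral.integral_pos hαβ ((hu.pow 2).div hp fun s hs => (hp_pos s hs).ne')
    (fun s hs => div_nonneg (sq_nonneg _) (hp_pos s (Ioc_subset_Icc_self hs)).le) ⟨c, hc, ?_⟩
  exact div_pos (by positivity) (hp_pos c hc)

lemma integral_mul_of_sturmLiouville {p q f f' h h' : ℝ → ℝ} (hαβ : α ≤ β)
    (hp : ContinuousOn p (Icc α β)) (hq : ContinuousOn q (Icc α β))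
    (hf : ∀ s ∈ Icc α β, HasDerivWithinAt f (f' s) (Icc α β) s)
    (hf' : ContinuousOn f' (Icc α β))
    (hpf' : ∀ s ∈ Icc α β, HasDerivWithinAt (fun t => p t * f' t) (-(q s * f s)) (Icc α β) s)
    (hh : ∀ s ∈ Icc α β, HasDerivWithinAt h (h' s) (Icc α β) s)
    (hh' : ContinuousOn h' (Icc α β)) :
    ∫ s in α..β, (p s * (f' s * h s + f s * h' s) ^ 2 - q s * (f s * h s) ^ 2) =
      (p β * f' β * f β * h β ^ 2 - p α * f' α * f α * h α ^ 2)
        + ∫ s in α..β, p s * (f s * h' s) ^ 2 := by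
  have hf_cont : ContinuousOn f (Icc α β) := fun s hs => (hf s hs).continuousWithinAt
  have hh_cont : ContinuousOn h (Icc α β) := fun s hs => (hh s hs).continuousWithinAt
  set Q' : ℝ → ℝ := fun s => (p s * f' s ^ 2 - q s * f s ^ 2) * h s ^ 2
    + 2 * p s * f' s * f s * h s * h' s with hQ'
  have hQ : ∀ s ∈ Icc α β,
      HasDerivWithinAt (fun t => p t * f' t * f t * h t ^ 2) (Q' s) (Icc α β) s := fun s hs =>
    (((hpf' s hs).fun_mul (hf s hs)).fun_mul ((hh s hs).fun_pow 2)).congr_deriv (by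
      simp only [hQ']; ring)
  have hQ'_int : IntervalIntegrable Q' MeasureTheory.volume α β :=
    ContinuousOn.intervalIntegrable_of_Icc hαβ (by fun_prop)
  have hremainder_int :
      IntervalIntegrable (fun s => p s * (f s * h' s) ^ 2) MeasureTheory.volume α β :=
    ContinuousOn.intervalIntegrable_of_Icc hαβ (by fun_prop)
  have hFTC : ∫ s in α..β, Q' s = p β * f' β * f β * h β ^ 2 - p α * f' α * f α * h α ^ 2 :=
    intervalIntegral.integral_eq_sub_of_hasDerivAt_of_le hαβ
      (fun s hs => (hQ s hs).continuousWithinAt)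
      (fun s hs => (hQ s (Ioo_subset_Icc_self hs)).hasDerivAt (Icc_mem_nhds hs.1 hs.2)) hQ'_int
  rw [← hFTC, ← intervalIntegral.integral_add hQ'_int hremainder_int]
  refine intervalIntegral.integral_congr fun s _ => ?_
  simp only [hQ']
  ring

end Calculus

section Profile

open Real

/-- The timelike Minkowski coordinate `X = A·cosh φ` of the surface, which is the hyperbolic cosine
of the distance to the centre of the ball. -/
noncomputable def timeCoord (a s : ℝ) : ℝ := A a s * cosh (φ a s)

/-- The timelike Minkowski coordinate of the unit normal of the surface, oriented so that
`X'' = X + (K/B²)·ν` for `X = timeCoord a` and `ν = normalTimeCoord a`. -/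
noncomputable def normalTimeCoord (a s : ℝ) : ℝ :=
  (K a * B a s * cosh (φ a s) - a * sinh (2 * s) * sinh (φ a s)) / (A a s * B a s)

variable {a : ℝ} (ha : 1 / 2 < a)

lemma even_A : (A a).Even := fun s => by simp [A]

lemma even_B : (B a).Even := fun s => by simp [B]

lemma odd_φ : (φ a).Odd := fun s => by
  have hreflect := intervalIntegral.integral_comp_neg (a := 0) (b := s)
    (fun t => 1 / (A a t ^ 2 * B a t))
  simp only [even_A.eq, even_B.eq, neg_zero] at hreflect
  rw [φ, φ, hreflect, intervalIntegral.integral_symm, mul_neg]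

lemma even_timeCoord : (timeCoord a).Even := fun s => by
  simp only [timeCoord, even_A.eq, odd_φ.eq, cosh_neg]

lemma fstar_eq_deriv_timeCoord : fstar a = deriv (timeCoord a) := rfl

lemma odd_fstar : (fstar a).Odd := fun s => by
  have hreflect := deriv_comp_neg (timeCoord a) (-s)
  simp only [even_timeCoord.eq, neg_neg] at hreflect
  simpa only [fstar_eq_deriv_timeCoord] using hreflect

lemma even_deriv_fstar : (deriv (fstar a)).Even := fun s => by
  have hreflect := deriv_comp_neg (fstar a) s
  simp only [odd_fstar.eq, deriv.fun_neg] at hreflect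
  exact (neg_injective hreflect).symm

lemma W_sub_W (k l : ℤ) (s : ℝ) : W a k s - W a l s = ((l : ℝ) ^ 2 - k ^ 2) / B a s ^ 2 := by
  simp only [W]
  ring

lemma hasDerivAt_mul_cosh_two_mul (s : ℝ) :
    HasDerivAt (fun t => a * cosh (2 * t)) (2 * (a * sinh (2 * s))) s :=
  ((hasDerivAt_const_mul (2 : ℝ)).cosh.const_mul a).congr_deriv (by ring)

lemma hasDerivAt_mul_sinh_two_mul (s : ℝ) :
    HasDerivAt (fun t => a * sinh (2 * t)) (2 * (a * cosh (2 * s))) s :=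
  ((hasDerivAt_const_mul (2 : ℝ)).sinh.const_mul a).congr_deriv (by ring)

include ha

lemma B_radicand_pos (s : ℝ) : 0 < a * cosh (2 * s) - 1 / 2 := by
  nlinarith [one_le_cosh (2 * s)]

lemma A_radicand_pos (s : ℝ) : 0 < a * cosh (2 * s) + 1 / 2 := by
  linarith [B_radicand_pos ha s]

lemma B_pos (s : ℝ) : 0 < B a s := sqrt_pos.2 (B_radicand_pos ha s)

lemma A_pos (s : ℝ) : 0 < A a s := sqrt_pos.2 (A_radicand_pos ha s)

lemma K_pos : 0 < K a := sqrt_pos.2 (by nlinarith)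

lemma mul_sinh_two_mul_pos {s : ℝ} (hs : 0 < s) : 0 < a * sinh (2 * s) :=
  mul_pos (by linarith) (sinh_pos_iff.2 (by linarith))

lemma mul_cosh_two_mul (s : ℝ) : a * cosh (2 * s) = B a s ^ 2 + 1 / 2 := by
  rw [B, sq_sqrt (B_radicand_pos ha s).le, sub_add_cancel]

lemma A_sq (s : ℝ) : A a s ^ 2 = B a s ^ 2 + 1 := by
  rw [A, sq_sqrt (A_radicand_pos ha s).le, mul_cosh_two_mul ha]
  ring

lemma K_sq : K a ^ 2 = a ^ 2 - 1 / 4 := sq_sqrt (by nlinarith)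

lemma mul_sinh_two_mul_sq_add_K_sq (s : ℝ) :
    (a * sinh (2 * s)) ^ 2 + K a ^ 2 = A a s ^ 2 * B a s ^ 2 := by
  have hcosh := mul_cosh_two_mul ha s
  rw [A_sq ha, K_sq ha, mul_pow, sinh_sq]
  linear_combination (a * cosh (2 * s) + B a s ^ 2 + 1 / 2) * hcosh

lemma hasDerivAt_B (s : ℝ) : HasDerivAt (B a) (a * sinh (2 * s) / B a s) s :=
  (((hasDerivAt_mul_cosh_two_mul s).sub_const (1 / 2)).sqrt (B_radicand_pos ha s).ne').congr_deriv
    (mul_div_mul_left _ _ two_ne_zero)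

lemma hasDerivAt_A (s : ℝ) : HasDerivAt (A a) (a * sinh (2 * s) / A a s) s :=
  (((hasDerivAt_mul_cosh_two_mul s).add_const (1 / 2)).sqrt (A_radicand_pos ha s).ne').congr_deriv
    (mul_div_mul_left _ _ two_ne_zero)

lemma continuous_A : Continuous (A a) :=
  continuous_iff_continuousAt.2 fun s => (hasDerivAt_A ha s).continuousAt

lemma continuous_B : Continuous (B a) :=
  continuous_iff_continuousAt.2 fun s => (hasDerivAt_B ha s).continuousAt

lemma hasDerivAt_φ (s : ℝ) : HasDerivAt (φ a) (K a / (A a s ^ 2 * B a s)) s := by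
  have hcont : Continuous fun t => 1 / (A a t ^ 2 * B a t) :=
    continuous_const.div (((continuous_A ha).pow 2).mul (continuous_B ha)) fun t =>
      (mul_pos (pow_pos (A_pos ha t) 2) (B_pos ha t)).ne'
  exact ((hcont.integral_hasStrictDerivAt 0 s).hasDerivAt.const_mul (K a)).congr_deriv
    (mul_one_div _ _)

lemma φ_nonneg {s : ℝ} (hs : 0 ≤ s) : 0 ≤ φ a s := by
  refine mul_nonneg (K_pos ha).le (intervalIntegral.integral_nonneg hs fun t _ => ?_)
  have := B_pos ha t
  positivity

lemma deriv_B : deriv (B a) = fun s => a * sinh (2 * s) / B a s :=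
  funext fun s => (hasDerivAt_B ha s).deriv

lemma hasDerivAt_deriv_B (s : ℝ) :
    HasDerivAt (deriv (B a)) (B a s + K a ^ 2 / B a s ^ 3) s := by
  have hB := B_pos ha s
  rw [deriv_B ha]
  refine ((hasDerivAt_mul_sinh_two_mul s).div (hasDerivAt_B ha s) hB.ne').congr_deriv ?_
  have hpyth := mul_sinh_two_mul_sq_add_K_sq ha s
  rw [A_sq ha] at hpyth
  rw [mul_cosh_two_mul ha]
  field_simp
  linear_combination -hpyth

lemma IIsq_eq (s : ℝ) : IIsq a s = 2 * K a ^ 2 / B a s ^ 4 := by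
  have hB := B_pos ha s
  rw [IIsq, (hasDerivAt_deriv_B ha s).deriv]
  field_simp
  ring

lemma continuous_W (k : ℤ) : Continuous (W a k) := by
  have hB := continuous_B ha
  have hB_ne : ∀ s, B a s ≠ 0 := fun s => (B_pos ha s).ne'
  have hW : W a k = fun s => 2 * K a ^ 2 / B a s ^ 4 - 2 - (k : ℝ) ^ 2 / B a s ^ 2 :=
    funext fun s => by rw [W, IIsq_eq ha]
  rw [hW]
  fun_prop (disch := simp [hB_ne])

end Profile

section TimeCoord

open Real

variable {a : ℝ} (ha : 1 / 2 < a)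

include ha

lemma one_le_timeCoord (s : ℝ) : 1 ≤ timeCoord a s := by
  have hA : 1 ≤ A a s := by nlinarith [A_sq ha s, A_pos ha s, sq_nonneg (B a s)]
  exact one_le_mul_of_one_le_of_one_le hA (one_le_cosh _)

lemma hasDerivAt_timeCoord (s : ℝ) : HasDerivAt (timeCoord a)
    ((a * sinh (2 * s) * B a s * cosh (φ a s) + K a * sinh (φ a s)) / (A a s * B a s)) s := by
  have hA := A_pos ha s
  have hB := B_pos ha s
  refine ((hasDerivAt_A ha s).mul (hasDerivAt_φ ha s).cosh).congr_deriv ?_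
  field_simp

lemma fstar_eq (s : ℝ) : fstar a s =
    (a * sinh (2 * s) * B a s * cosh (φ a s) + K a * sinh (φ a s)) / (A a s * B a s) :=
  (hasDerivAt_timeCoord ha s).deriv

lemma fstar_pos {s : ℝ} (hs : 0 < s) : 0 < fstar a s := by
  have hA := A_pos ha s
  have hB := B_pos ha s
  have hK := K_pos ha
  have hS := mul_sinh_two_mul_pos ha hs
  have hsinh := sinh_nonneg_iff.2 (φ_nonneg ha hs.le)
  rw [fstar_eq ha]
  exact div_pos (add_pos_of_pos_of_nonneg (mul_pos (mul_pos hS hB) (cosh_pos _))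
    (mul_nonneg hK.le hsinh)) (mul_pos hA hB)

lemma support_fstar : (fstar a).support = {0}ᶜ := by
  ext s
  rw [Function.mem_support, Set.mem_compl_singleton_iff, not_iff_not]
  refine ⟨fun hzero => ?_, fun hs => by rw [hs, odd_fstar.map_zero]⟩
  rcases lt_trichotomy s 0 with hs | hs | hs
  · have hpos := fstar_pos ha (neg_pos.2 hs)
    rw [odd_fstar.eq, hzero, neg_zero] at hpos
    exact absurd hpos (lt_irrefl 0)
  · exact hs
  · exact absurd hzero (ne_of_gt (fstar_pos ha hs))

/-- The unit timelike vector `e₀` has square `-1`; its components along the position, the profile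
tangent and the normal are `X`, `f_*` and `ν`, and its angular component vanishes. -/
lemma fstar_sq_add_normalTimeCoord_sq (s : ℝ) :
    fstar a s ^ 2 + normalTimeCoord a s ^ 2 = timeCoord a s ^ 2 - 1 := by
  have hA := A_pos ha s
  have hB := B_pos ha s
  have hpyth := mul_sinh_two_mul_sq_add_K_sq ha s
  have hA_sq := A_sq ha s
  rw [fstar_eq ha, normalTimeCoord, timeCoord]
  generalize a * sinh (2 * s) = S at *
  field_simp
  linear_combination (B a s ^ 2 * cosh (φ a s) ^ 2 + sinh (φ a s) ^ 2) * hpyth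
    - A a s ^ 2 * B a s ^ 2 * cosh (φ a s) ^ 2 * hA_sq - A a s ^ 2 * B a s ^ 2 * cosh_sq (φ a s)

/-- Both sides are the Hessian of `X` in the angular direction. -/
lemma mul_fstar_eq_timeCoord_sub (s : ℝ) : a * sinh (2 * s) / B a s ^ 2 * fstar a s =
    timeCoord a s - K a / B a s ^ 2 * normalTimeCoord a s := by
  have hA := A_pos ha s
  have hB := B_pos ha s
  have hpyth := mul_sinh_two_mul_sq_add_K_sq ha s
  rw [fstar_eq ha, normalTimeCoord, timeCoord]
  generalize a * sinh (2 * s) = S at *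
  field_simp
  linear_combination B a s * cosh (φ a s) * hpyth

lemma hasDerivAt_B_mul_fstar (s : ℝ) :
    HasDerivAt (fun t => B a t * fstar a t) (2 * (B a s * timeCoord a s)) s := by
  have hA := A_pos ha s
  have hB := B_pos ha s
  have hfun : (fun t => B a t * fstar a t) = fun t =>
      (a * sinh (2 * t) * B a t * cosh (φ a t) + K a * sinh (φ a t)) / A a t :=
    funext fun t => by
      have := B_pos ha t
      rw [fstar_eq ha]
      field_simp
  rw [hfun]
  have hφ := hasDerivAt_φ ha s
  refine (((((hasDerivAt_mul_sinh_two_mul s).fun_mul (hasDerivAt_B ha s)).fun_mul hφ.cosh).fun_add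
    (hφ.sinh.const_mul (K a))).fun_div (hasDerivAt_A ha s) hA.ne').congr_deriv ?_
  have hpyth := mul_sinh_two_mul_sq_add_K_sq ha s
  have hA_sq := A_sq ha s
  rw [mul_cosh_two_mul ha, timeCoord]
  generalize a * sinh (2 * s) = S at *
  field_simp
  linear_combination cosh (φ a s) * hpyth
    + cosh (φ a s) * (S ^ 2 - 2 * A a s ^ 2 * B a s ^ 2) * hA_sq

lemma hasDerivAt_fstar (s : ℝ) : HasDerivAt (fstar a)
    (2 * timeCoord a s - a * sinh (2 * s) / B a s ^ 2 * fstar a s) s := by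
  have hfun : fstar a = fun t => B a t * fstar a t / B a t :=
    funext fun t => (mul_div_cancel_left₀ _ (B_pos ha t).ne').symm
  have hB := B_pos ha s
  rw [hfun]
  refine ((hasDerivAt_B_mul_fstar ha s).fun_div (hasDerivAt_B ha s) hB.ne').congr_deriv ?_
  field_simp

lemma deriv_fstar (s : ℝ) :
    deriv (fstar a) s = 2 * timeCoord a s - a * sinh (2 * s) / B a s ^ 2 * fstar a s :=
  (hasDerivAt_fstar ha s).deriv

lemma hasDerivAt_B_mul_deriv_fstar (s : ℝ) : HasDerivAt (fun t => B a t * deriv (fstar a) t)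
    (-(B a s * W a 1 s * fstar a s)) s := by
  have hB := B_pos ha s
  have hfun : (fun t => B a t * deriv (fstar a) t) = fun t =>
      2 * (B a t * timeCoord a t) - deriv (B a) t * fstar a t :=
    funext fun t => by
      have := B_pos ha t
      rw [deriv_fstar ha, deriv_B ha]
      field_simp
  have hX : HasDerivAt (timeCoord a) (fstar a s) s := fstar_eq ha s ▸ hasDerivAt_timeCoord ha s
  rw [hfun]
  refine ((((hasDerivAt_B ha s).fun_mul hX).const_mul 2).fun_sub
    ((hasDerivAt_deriv_B ha s).fun_mul (hasDerivAt_fstar ha s))).congr_deriv ?_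
  have hpyth := mul_sinh_two_mul_sq_add_K_sq ha s
  rw [A_sq ha] at hpyth
  rw [W, IIsq_eq ha, Int.cast_one, deriv_B ha]
  field_simp
  linear_combination fstar a s * hpyth

lemma contDiff_fstar : ContDiff ℝ 1 (fstar a) := by
  have hf : Differentiable ℝ (fstar a) := fun s => (hasDerivAt_fstar ha s).differentiableAt
  refine contDiff_one_iff_deriv.2 ⟨hf, ?_⟩
  have hBf' : Continuous fun s => B a s * deriv (fstar a) s :=
    continuous_iff_continuousAt.2 fun s => (hasDerivAt_B_mul_deriv_fstar ha s).continuousAt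
  exact (hBf'.div (continuous_B ha) fun s => (B_pos ha s).ne').congr fun s =>
    mul_div_cancel_left₀ _ (B_pos ha s).ne'

end TimeCoord

section FreeBoundary

open Real

variable {a s₀ : ℝ} (ha : 1 / 2 < a) (hs₀ : 0 < s₀)

include ha hs₀

lemma normalTimeCoord_eq_zero_of_freeBoundary
    (hFBC : tanh (φ a s₀) = B a s₀ * K a / (a * sinh (2 * s₀))) : normalTimeCoord a s₀ = 0 := by
  rw [tanh_eq_sinh_div_cosh,
    div_eq_div_iff (cosh_pos _).ne' (mul_sinh_two_mul_pos ha hs₀).ne'] at hFBC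
  rw [normalTimeCoord, div_eq_zero_iff]
  exact Or.inl (by linear_combination -hFBC)

lemma coth_mul_fstar_eq_deriv_fstar (hν : normalTimeCoord a s₀ = 0) :
    cosh (arcosh (timeCoord a s₀)) / sinh (arcosh (timeCoord a s₀)) * fstar a s₀
      = deriv (fstar a) s₀ := by
  have hf := fstar_pos ha hs₀
  have hX : deriv (fstar a) s₀ = timeCoord a s₀ := by
    rw [deriv_fstar ha, mul_fstar_eq_timeCoord_sub ha, hν]
    ring
  have hcosh : cosh (arcosh (timeCoord a s₀)) = timeCoord a s₀ :=
    Real.cosh_arcosh (one_le_timeCoord ha s₀)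
  have hsinh : sinh (arcosh (timeCoord a s₀)) = fstar a s₀ := by
    have hsq := fstar_sq_add_normalTimeCoord_sq ha s₀
    rw [hν, zero_pow two_ne_zero, add_zero] at hsq
    rw [← sqrt_sq hf.le, hsq]
    exact Real.sinh_arcosh (one_le_timeCoord ha s₀)
  rw [hcosh, hsinh, hX, div_mul_cancel₀ _ hf.ne']

end FreeBoundary

section QuadraticForm

open Set

variable {a s₀ : ℝ} (ha : 1 / 2 < a) (hs₀ : 0 < s₀)

include ha hs₀

lemma Sk_sub_Sk (r : ℝ) (k l : ℤ) {u : ℝ → ℝ} (hu : ContDiffOn ℝ 1 u (Icc (-s₀) s₀)) :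
    Sk a s₀ r k u - Sk a s₀ r l u
      = ((k : ℝ) ^ 2 - l ^ 2) * ∫ s in (-s₀)..s₀, u s ^ 2 / B a s := by
  have hle : -s₀ ≤ s₀ := by linarith
  have hint (m : ℤ) : IntervalIntegrable (fun s => B a s * derivWithin u (Icc (-s₀) s₀) s ^ 2
      - B a s * W a m s * u s ^ 2) MeasureTheory.volume (-s₀) s₀ := by
    have hB := continuous_B ha
    have hW := continuous_W ha m
    have hu_cont := hu.continuousOn
    have hu' := hu.continuousOn_derivWithin (uniqueDiffOn_Icc (by linarith)) le_rfl
    exact ContinuousOn.intervalIntegrable_of_Icc hle (by fun_prop)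
  rw [Sk, Sk, sub_sub_sub_cancel_right, ← intervalIntegral.integral_sub (hint k) (hint l),
    ← intervalIntegral.integral_const_mul]
  refine intervalIntegral.integral_congr fun s _ => ?_
  have hB := B_pos ha s
  have hW := W_sub_W (a := a) k l s
  field_simp at hW ⊢
  linear_combination -u s ^ 2 * hW

lemma Sk_one_fstar_mul {r : ℝ} (hr : Real.cosh r / Real.sinh r * fstar a s₀ = deriv (fstar a) s₀)
    {h : ℝ → ℝ} (hh : ContDiffOn ℝ 1 h (Icc (-s₀) s₀)) :
    Sk a s₀ r 1 (fun s => fstar a s * h s) =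
      ∫ s in (-s₀)..s₀, B a s * (fstar a s * derivWithin h (Icc (-s₀) s₀) s) ^ 2 := by
  have hlt : -s₀ < s₀ := by linarith
  have hunique := uniqueDiffOn_Icc hlt
  have hf (s : ℝ) : HasDerivWithinAt (fstar a) (deriv (fstar a) s) (Icc (-s₀) s₀) s :=
    (hasDerivAt_fstar ha s).differentiableAt.hasDerivAt.hasDerivWithinAt
  have hh' : ∀ s ∈ Icc (-s₀) s₀,
      HasDerivWithinAt h (derivWithin h (Icc (-s₀) s₀) s) (Icc (-s₀) s₀) s :=
    fun s hs => (hh.differentiableOn one_ne_zero s hs).hasDerivWithinAt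
  have hbulk := integral_mul_of_sturmLiouville hlt.le (continuous_B ha).continuousOn
    ((continuous_B ha).mul (continuous_W ha 1)).continuousOn (fun s _ => hf s)
    ((contDiff_fstar ha).continuous_deriv le_rfl).continuousOn
    (fun s _ => (hasDerivAt_B_mul_deriv_fstar ha s).hasDerivWithinAt) hh'
    (hh.continuousOn_derivWithin hunique le_rfl)
  have hintegrand : EqOn
      (fun s => B a s * derivWithin (fun t => fstar a t * h t) (Icc (-s₀) s₀) s ^ 2
        - B a s * W a 1 s * (fstar a s * h s) ^ 2)
      (fun s => B a s * (deriv (fstar a) s * h s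
        + fstar a s * derivWithin h (Icc (-s₀) s₀) s) ^ 2
        - B a s * W a 1 s * (fstar a s * h s) ^ 2) (uIcc (-s₀) s₀) := fun s hs => by
    rw [uIcc_of_le hlt.le] at hs
    simp only [((hf s).fun_mul (hh' s hs)).derivWithin (hunique s hs)]
  rw [Sk, intervalIntegral.integral_congr hintegrand]
  simp only [Pi.mul_apply] at hbulk
  rw [hbulk, odd_fstar.eq, even_deriv_fstar.eq, even_B.eq, ← hr]
  ring

end QuadraticForm

/-- Strict positivity in the sector generated by `f_*`: under the free boundary
condition, for every integer `k` with `k² ≥ 4` and every `C¹` function `h` on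
`[−s₀, s₀]` not identically zero there, `S_k(f_*·h) > 0`. -/
theorem strict_positivity_fstar_sector (a : ℝ) (ha : 1 / 2 < a) (s₀ : ℝ) (hs₀ : 0 < s₀)
    (hFBC : Real.tanh (φ a s₀) = B a s₀ * K a / (a * Real.sinh (2 * s₀)))
    (r : ℝ) (hr : r = arcosh (A a s₀ * Real.cosh (φ a s₀)))
    (k : ℤ) (hk : 4 ≤ k ^ 2)
    (h : ℝ → ℝ) (hh : ContDiffOn ℝ 1 h (Set.Icc (-s₀) s₀))
    (hne : ∃ s ∈ Set.Icc (-s₀) s₀, h s ≠ 0) :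
    0 < Sk a s₀ r k (fun s => fstar a s * h s) := by
  have hlt : -s₀ < s₀ := by linarith
  have hf := contDiff_fstar ha
  have hν := normalTimeCoord_eq_zero_of_freeBoundary ha hs₀ hFBC
  have hcoth : Real.cosh r / Real.sinh r * fstar a s₀ = deriv (fstar a) s₀ :=
    hr ▸ coth_mul_fstar_eq_deriv_fstar ha hs₀ hν
  have hmode_one : 0 ≤ Sk a s₀ r 1 (fun s => fstar a s * h s) := by
    rw [Sk_one_fstar_mul ha hs₀ hcoth hh]
    exact intervalIntegral.integral_nonneg hlt.le fun s _ =>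
      mul_nonneg (B_pos ha s).le (sq_nonneg _)
  have hfh : ∃ s ∈ Set.Icc (-s₀) s₀, fstar a s * h s ≠ 0 :=
    exists_mul_ne_zero_of_dense_support (closure_interior_Icc hlt.ne).ge
      (support_fstar ha ▸ dense_compl_singleton 0) hh.continuousOn hne
  have hgap : 0 < ∫ s in (-s₀)..s₀, (fstar a s * h s) ^ 2 / B a s :=
    integral_sq_div_pos hlt (continuous_B ha).continuousOn (fun s _ => B_pos ha s)
      (hf.continuous.continuousOn.mul hh.continuousOn) hfh
  have hk' : (4 : ℝ) ≤ (k : ℝ) ^ 2 := mod_cast hk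
  have hsplit := Sk_sub_Sk ha hs₀ r k 1 (hf.contDiffOn.mul hh)
  rw [Int.cast_one] at hsplit
  have hmodes := mul_pos (by linarith : (0 : ℝ) < (k : ℝ) ^ 2 - 1 ^ 2) hgap
  linarith

end MoriCatenoid
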